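/- Let 0 ≤ r1, r2 ≤ n and 0 ≤ s ≤ min(r1, n − r1, r2, n − r2). Then L^{(r2)} ∘ Λ_s^{r1,r2} = −s(n − s + 1) · Λ_s^{r1,r2} as linear maps (X_{r1} → ℂ) → (X_{r2} → ℂ); that is, Λ_s^{r1,r2} is an eigenvector of the transposition Laplacian with eigenvalue −s(n − s + 1). -/

import Mathlib

/-- Falling factorial `z(z-1)⋯(z-k+1)` for complex `z`. -/
noncomputable def cfall (z : ℂ) (k : ℕ) : ℂ := ∏ i ∈ Finset.range k, (z - i)

/-- Generalized binomial coefficient `binom(t, j)` for complex `t`. -/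
noncomputable def cbinom (t : ℂ) (j : ℕ) : ℂ := cfall t j / (Nat.factorial j)

/-- The Hahn kernel `λ_s^{r1,r2}(t; n)`. -/
noncomputable def hahn (n r1 r2 s : ℕ) (t : ℂ) : ℂ :=
  ∑ j ∈ Finset.range (s + 1),
    (-1 : ℂ) ^ j * cbinom t j * cfall (s : ℂ) j * cfall ((n : ℂ) - s + 1) j /
      (cfall ((n : ℂ) - r1) j * cfall (r2 : ℂ) j)

/-- The operator `Λ_s^{r1,r2} : (X_{r1} → ℂ) → (X_{r2} → ℂ)` with kernel
`λ_s^{r1,r2}(|x2 \ x1|; n)`. -/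
noncomputable def Lam (Ω : Type*) [Fintype Ω] [DecidableEq Ω] (n r1 r2 s : ℕ)
    (ψ : {x : Finset Ω // x.card = r1} → ℂ) : {x : Finset Ω // x.card = r2} → ℂ :=
  fun x2 => ∑ x1 : {x : Finset Ω // x.card = r1},
    hahn n r1 r2 s ((((x2 : Finset Ω) \ (x1 : Finset Ω)).card : ℕ) : ℂ) * ψ x1

/-- The action of a permutation `g` of `Ω` on `r`-element subsets, by taking images. -/
def permAct {Ω : Type*} [DecidableEq Ω] (g : Equiv.Perm Ω) {r : ℕ}
    (x : {x : Finset Ω // x.card = r}) : {x : Finset Ω // x.card = r} :=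
  ⟨x.1.image g, by rw [Finset.card_image_of_injective _ g.injective]; exact x.2⟩

open scoped Classical in
/-- The transposition Laplacian on functions `X_r → ℂ`:
`(Lφ)(x) = Σ_{g a transposition} φ(g(x)) - binom(n,2) φ(x)`. -/
noncomputable def Lap {Ω : Type*} [Fintype Ω] [DecidableEq Ω] {r : ℕ}
    (φ : {x : Finset Ω // x.card = r} → ℂ) : {x : Finset Ω // x.card = r} → ℂ :=
  fun x => (∑ g : Equiv.Perm Ω, if g.IsSwap then φ (permAct g x) else 0) -
    (((Fintype.card Ω).choose 2 : ℕ) : ℂ) * φ x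

/-! ### The one-variable difference equation -/

theorem cfall_succ' (z : ℂ) (k : ℕ) : cfall z (k + 1) = cfall z k * (z - k) := by
  simp [cfall, Finset.prod_range_succ]

theorem cfall_zero' (z : ℂ) : cfall z 0 = 1 := by simp [cfall]

theorem cfall_shift (z : ℂ) (k : ℕ) : cfall (z + 1) (k + 1) = (z + 1) * cfall z k := by
  unfold cfall
  rw [Finset.prod_range_succ', mul_comm]
  congr 1
  · simp
  · apply Finset.prod_congr rfl
    intro i _
    push_cast
    ring

theorem cbinom_zero' (z : ℂ) : cbinom z 0 = 1 := by simp [cbinom, cfall_zero']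

theorem cbinom_succ' (z : ℂ) (k : ℕ) :
    ((k : ℂ) + 1) * cbinom z (k + 1) = (z - k) * cbinom z k := by
  unfold cbinom
  rw [cfall_succ', Nat.factorial_succ]
  have h1 : ((k : ℂ) + 1) ≠ 0 := by exact_mod_cast Nat.succ_ne_zero k
  have h2 : ((k.factorial : ℕ) : ℂ) ≠ 0 := by exact_mod_cast Nat.factorial_ne_zero k
  push_cast
  field_simp

theorem cbinom_shift (z : ℂ) (k : ℕ) :
    ((k : ℂ) + 1) * cbinom (z + 1) (k + 1) = (z + 1) * cbinom z k := by
  unfold cbinom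
  rw [cfall_shift, Nat.factorial_succ]
  have h1 : ((k : ℂ) + 1) ≠ 0 := by exact_mod_cast Nat.succ_ne_zero k
  have h2 : ((k.factorial : ℕ) : ℂ) ≠ 0 := by exact_mod_cast Nat.factorial_ne_zero k
  push_cast
  field_simp

theorem cbinom_pascal (z : ℂ) (k : ℕ) :
    cbinom (z + 1) (k + 1) = cbinom z (k + 1) + cbinom z k := by
  have h1 : ((k : ℂ) + 1) ≠ 0 := by exact_mod_cast Nat.succ_ne_zero k
  apply mul_left_cancel₀ h1
  rw [mul_add, cbinom_shift, cbinom_succ']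
  ring

/-- The action of the difference operator on a binomial polynomial. -/
theorem diff_cbinom (N R1 R2 t : ℂ) (k : ℕ) :
    t * (R1 - R2 + t) * (cbinom (t - 1) (k + 1) - cbinom t (k + 1)) +
      (R2 - t) * (N - R1 - t) * (cbinom (t + 1) (k + 1) - cbinom t (k + 1)) =
    (N - R1 - k) * (R2 - k) * cbinom t k - (k + 1) * (N - k) * cbinom t (k + 1) := by
  have hp := cbinom_pascal t k
  have hq := cbinom_pascal (t - 1) k
  have hs := cbinom_succ' t k
  have hr := cbinom_shift (t - 1) k
  rw [sub_add_cancel] at hq hr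
  rw [hp]
  have e : cbinom (t - 1) (k + 1) - cbinom t (k + 1) = - cbinom (t - 1) k := by rw [hq]; ring
  rw [e]
  linear_combination (R1 - R2 + t) * hr + (R2 + (N - R1 - k) - t) * hs

noncomputable def hcoef (n r1 r2 s : ℕ) (j : ℕ) : ℂ :=
  (-1 : ℂ) ^ j * cfall (s : ℂ) j * cfall ((n : ℂ) - s + 1) j /
      (cfall ((n : ℂ) - r1) j * cfall (r2 : ℂ) j)

theorem hahn_eq (n r1 r2 s : ℕ) (t : ℂ) :
    hahn n r1 r2 s t = ∑ j ∈ Finset.range (s + 1), hcoef n r1 r2 s j * cbinom t j := by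
  unfold hahn hcoef
  apply Finset.sum_congr rfl
  intro j _
  ring

theorem hcoef_rec (n r1 r2 s k : ℕ) (h1 : r1 ≤ n) (hk : k < s) (ha : s ≤ n - r1) (hb : s ≤ r2) :
    hcoef n r1 r2 s (k + 1) * (((n : ℂ) - r1 - k) * ((r2 : ℂ) - k)) =
      - (hcoef n r1 r2 s k * (((s : ℂ) - k) * ((n : ℂ) - s + 1 - k))) := by
  have e1 : ((n : ℂ) - r1 - k) ≠ 0 := by
    have : ((n : ℂ) - r1 - k) = ((n - r1 - k : ℕ) : ℂ) := by
      rw [Nat.cast_sub (by omega), Nat.cast_sub h1]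
    rw [this]
    exact_mod_cast (by omega : n - r1 - k ≠ 0)
  have e2 : ((r2 : ℂ) - k) ≠ 0 := by
    rw [← Nat.cast_sub (by omega)]
    exact_mod_cast (by omega : r2 - k ≠ 0)
  unfold hcoef
  simp only [cfall_succ']
  rw [div_mul_eq_mul_div, div_mul_eq_mul_div, ← neg_div,
    show cfall ((n : ℂ) - r1) k * ((n : ℂ) - r1 - k) * (cfall (r2 : ℂ) k * ((r2 : ℂ) - k)) =
      (cfall ((n : ℂ) - r1) k * cfall (r2 : ℂ) k) * (((n : ℂ) - r1 - k) * ((r2 : ℂ) - k)) by ring,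
    mul_div_mul_right _ _ (mul_ne_zero e1 e2)]
  congr 1
  ring

theorem hahn_diff (n r1 r2 s : ℕ) (h1 : r1 ≤ n) (ha : s ≤ n - r1) (hb : s ≤ r2) (t : ℂ) :
    t * (r1 - r2 + t) * (hahn n r1 r2 s (t - 1) - hahn n r1 r2 s t) +
      (r2 - t) * (n - r1 - t) * (hahn n r1 r2 s (t + 1) - hahn n r1 r2 s t) =
    -((s : ℂ) * ((n : ℂ) - s + 1)) * hahn n r1 r2 s t := by
  -- partial sums
  have key : ∀ m : ℕ, m ≤ s →
      ∑ j ∈ Finset.range (m + 1), hcoef n r1 r2 s j *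
        (t * (r1 - r2 + t) * (cbinom (t - 1) j - cbinom t j) +
          (r2 - t) * (n - r1 - t) * (cbinom (t + 1) j - cbinom t j) +
          (s : ℂ) * ((n : ℂ) - s + 1) * cbinom t j) =
      hcoef n r1 r2 s m * (((s : ℂ) - m) * ((n : ℂ) - s + 1 - m)) * cbinom t m := by
    intro m
    induction m with
    | zero =>
      intro _
      simp [cbinom_zero']
    | succ k ih =>
      intro hk
      rw [Finset.sum_range_succ, ih (by omega), diff_cbinom]
      have hc := hcoef_rec n r1 r2 s k h1 (by omega) ha hb
      push_cast
      linear_combination cbinom t k * hc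
  have := key s le_rfl
  rw [sub_self, zero_mul, mul_zero, zero_mul] at this
  simp only [hahn_eq]
  rw [← sub_eq_zero, ← this]
  simp only [← Finset.sum_sub_distrib, Finset.mul_sum, ← Finset.sum_add_distrib]
  apply Finset.sum_congr rfl
  intro j _
  ring

/-! ### Sums over transpositions -/

open scoped Classical in
theorem sum_swaps {Ω : Type*} [Fintype Ω] [DecidableEq Ω] (h : Equiv.Perm Ω → ℂ) :
    2 * (∑ g : Equiv.Perm Ω, if g.IsSwap then h g else 0) =
      ∑ p ∈ (Finset.univ : Finset Ω).offDiag, h (Equiv.swap p.1 p.2) := by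
  rw [← Finset.sum_fiberwise (Finset.univ : Finset Ω).offDiag
    (fun p => Equiv.swap p.1 p.2) (fun p => h (Equiv.swap p.1 p.2)), Finset.mul_sum]
  apply Finset.sum_congr rfl
  intro g _
  rw [Finset.sum_congr rfl (g := fun _ => h g)
    (fun p hp => by rw [(Finset.mem_filter.1 hp).2])]
  rw [Finset.sum_const, nsmul_eq_mul]
  by_cases hg : g.IsSwap
  · rw [if_pos hg]
    congr 1
    obtain ⟨a, b, hab, rfl⟩ := hg
    have : (Finset.univ : Finset Ω).offDiag.filter
        (fun p => Equiv.swap p.1 p.2 = Equiv.swap a b) = {(a, b), (b, a)} := by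
      ext ⟨c, d⟩
      simp only [Finset.mem_filter, Finset.mem_offDiag, Finset.mem_univ, true_and,
        Finset.mem_insert, Finset.mem_singleton, Prod.mk.injEq]
      constructor
      · rintro ⟨hcd, he⟩
        have hc : Equiv.swap a b c = d := by rw [← he, Equiv.swap_apply_left]
        by_cases h1 : c = a
        · subst h1
          rw [Equiv.swap_apply_left] at hc
          exact Or.inl ⟨rfl, hc.symm⟩
        · by_cases h2 : c = b
          · subst h2
            rw [Equiv.swap_apply_right] at hc
            exact Or.inr ⟨rfl, hc.symm⟩
          · rw [Equiv.swap_apply_of_ne_of_ne h1 h2] at hc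
            exact absurd hc hcd
      · rintro (⟨rfl, rfl⟩ | ⟨rfl, rfl⟩)
        · exact ⟨hab, rfl⟩
        · exact ⟨hab.symm, Equiv.swap_comm _ _⟩
    rw [this, Finset.card_pair (by simp [hab])]
    norm_num
  · rw [if_neg hg, mul_zero]
    have : (Finset.univ : Finset Ω).offDiag.filter
        (fun p => Equiv.swap p.1 p.2 = g) = ∅ := by
      apply Finset.filter_false_of_mem
      rintro ⟨c, d⟩ hp he
      exact hg ⟨c, d, (Finset.mem_offDiag.1 hp).2.2, he.symm⟩
    rw [this]
    simp

theorem permAct_one {Ω : Type*} [DecidableEq Ω] {r : ℕ} (x : {x : Finset Ω // x.card = r}) :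
    permAct 1 x = x := by
  apply Subtype.ext
  simp [permAct]

theorem two_Lap {Ω : Type*} [Fintype Ω] [DecidableEq Ω] {r : ℕ}
    (φ : {x : Finset Ω // x.card = r} → ℂ) (x : {x : Finset Ω // x.card = r}) :
    2 * Lap φ x = ∑ i : Ω, ∑ j : Ω, (φ (permAct (Equiv.swap i j) x) - φ x) := by
  classical
  have hc : (2 : ℂ) * (((Fintype.card Ω).choose 2 : ℕ) : ℂ) =
      (((Finset.univ : Finset Ω).offDiag.card : ℕ) : ℂ) := by
    rw [Finset.offDiag_card, Finset.card_univ]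
    have h2 : 2 * (Fintype.card Ω).choose 2 =
        Fintype.card Ω * Fintype.card Ω - Fintype.card Ω := by
      rw [Nat.choose_two_right, Nat.mul_div_cancel' (Nat.even_mul_pred_self _).two_dvd,
        Nat.mul_sub, mul_one]
    exact_mod_cast h2
  unfold Lap
  rw [mul_sub, ← mul_assoc, hc, sum_swaps (fun g => φ (permAct g x)), ← nsmul_eq_mul,
    ← Finset.sum_const, ← Finset.sum_sub_distrib, ← Finset.sum_product', Finset.univ_product_univ]
  apply Finset.sum_subset (Finset.subset_univ _)
  rintro ⟨i, j⟩ _ hp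
  have : i = j := by
    by_contra hne
    exact hp (by simp [hne])
  subst this
  simp only [Equiv.swap_self]
  rw [show (Equiv.refl Ω) = 1 from rfl, permAct_one, sub_self]

theorem image_swap_move {Ω : Type*} [DecidableEq Ω] (x : Finset Ω) (i j : Ω)
    (hi : i ∈ x) (hj : j ∉ x) : x.image (Equiv.swap i j) = insert j (x.erase i) := by
  have hij : i ≠ j := fun h => hj (h ▸ hi)
  ext k
  simp only [Finset.mem_image, Finset.mem_insert, Finset.mem_erase]
  constructor
  · rintro ⟨a, ha, rfl⟩
    by_cases h1 : a = i
    · left; rw [h1, Equiv.swap_apply_left]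
    · have h2 : a ≠ j := fun h => hj (h ▸ ha)
      rw [Equiv.swap_apply_of_ne_of_ne h1 h2]
      exact Or.inr ⟨h1, ha⟩
  · rintro (rfl | ⟨h1, h2⟩)
    · exact ⟨i, hi, Equiv.swap_apply_left _ _⟩
    · exact ⟨k, h2, Equiv.swap_apply_of_ne_of_ne h1 (fun h => hj (h ▸ h2))⟩

theorem image_swap_same {Ω : Type*} [DecidableEq Ω] (x : Finset Ω) (i j : Ω)
    (h : i ∈ x ↔ j ∈ x) : x.image (Equiv.swap i j) = x := by
  apply Finset.eq_of_subset_of_card_le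
  · intro k hk
    obtain ⟨a, ha, rfl⟩ := Finset.mem_image.1 hk
    rw [Equiv.swap_apply_def]
    split_ifs with h1 h2
    · exact h.1 (h1 ▸ ha)
    · exact h.2 (h2 ▸ ha)
    · exact ha
  · rw [Finset.card_image_of_injective _ (Equiv.injective _)]

/-- Change of the kernel when `i ∈ x` is replaced by `j ∉ x`. -/
theorem term_move {Ω : Type*} [DecidableEq Ω] (F : ℂ → ℂ) (x y : Finset Ω) (i j : Ω)
    (hi : i ∈ x) (hj : j ∉ x) :
    F (((x.image (Equiv.swap i j) \ y).card : ℕ) : ℂ) - F (((x \ y).card : ℕ) : ℂ) =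
      (if i ∈ x \ y then 1 else 0) * (if j ∈ y \ x then 1 else 0) *
        (F (((x \ y).card : ℕ) - 1 : ℂ) - F (((x \ y).card : ℕ) : ℂ)) +
      (if i ∈ x ∩ y then 1 else 0) * (if j ∉ x ∪ y then 1 else 0) *
        (F (((x \ y).card : ℕ) + 1 : ℂ) - F (((x \ y).card : ℕ) : ℂ)) := by
  rw [image_swap_move x i j hi hj]
  by_cases hiy : i ∈ y <;> by_cases hjy : j ∈ y
  · have : insert j (x.erase i) \ y = x \ y := by
      ext k
      simp only [Finset.mem_sdiff, Finset.mem_insert, Finset.mem_erase]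
      grind
    rw [this]
    simp [hiy, hjy]
  · have : insert j (x.erase i) \ y = insert j (x \ y) := by
      ext k
      simp only [Finset.mem_sdiff, Finset.mem_insert, Finset.mem_erase]
      grind
    rw [this, Finset.card_insert_of_notMem (by simp [hj])]
    simp [hiy, hjy, hi, hj]
  · have : insert j (x.erase i) \ y = (x \ y).erase i := by
      ext k
      simp only [Finset.mem_sdiff, Finset.mem_insert, Finset.mem_erase]
      grind
    rw [this, Finset.cast_card_erase_of_mem (by simp [hi, hiy])]
    simp [hiy, hjy, hi, hj]
  · have : insert j (x.erase i) \ y = insert j ((x \ y).erase i) := by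
      ext k
      simp only [Finset.mem_sdiff, Finset.mem_insert, Finset.mem_erase]
      grind
    rw [this, Finset.card_insert_of_notMem (by simp [hj]),
      Finset.card_erase_add_one (by simp [hi, hiy])]
    simp [hiy, hjy]

theorem term_all {Ω : Type*} [DecidableEq Ω] (F : ℂ → ℂ) (x y : Finset Ω) (i j : Ω) :
    F (((x.image (Equiv.swap i j) \ y).card : ℕ) : ℂ) - F (((x \ y).card : ℕ) : ℂ) =
      ((if i ∈ x \ y then 1 else 0) * (if j ∈ y \ x then 1 else 0) +
        (if j ∈ x \ y then 1 else 0) * (if i ∈ y \ x then 1 else 0)) *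
        (F (((x \ y).card : ℕ) - 1 : ℂ) - F (((x \ y).card : ℕ) : ℂ)) +
      ((if i ∈ x ∩ y then 1 else 0) * (if j ∉ x ∪ y then 1 else 0) +
        (if j ∈ x ∩ y then 1 else 0) * (if i ∉ x ∪ y then 1 else 0)) *
        (F (((x \ y).card : ℕ) + 1 : ℂ) - F (((x \ y).card : ℕ) : ℂ)) := by
  by_cases hi : i ∈ x <;> by_cases hj : j ∈ x
  · rw [image_swap_same x i j (by simp [hi, hj])]
    simp [hi, hj]
  · rw [term_move F x y i j hi hj]
    simp [hi, hj]
  · rw [Equiv.swap_comm, term_move F x y j i hj hi]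
    simp [hi, hj]
  · rw [image_swap_same x i j (by simp [hi, hj])]
    simp [hi, hj]

theorem sum_term {Ω : Type*} [Fintype Ω] [DecidableEq Ω] (F : ℂ → ℂ) (x y : Finset Ω) (t : ℂ)
    (ht : t = (((x \ y).card : ℕ) : ℂ)) :
    ∑ i : Ω, ∑ j : Ω,
      (F (((x.image (Equiv.swap i j) \ y).card : ℕ) : ℂ) - F (((x \ y).card : ℕ) : ℂ)) =
    2 * (t * ((y.card : ℂ) - x.card + t) * (F (t - 1) - F t) +
      ((x.card : ℂ) - t) * ((Fintype.card Ω : ℂ) - y.card - t) * (F (t + 1) - F t)) := by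
  have c1 : ((x ∩ y).card : ℂ) = (x.card : ℂ) - t := by
    rw [ht, ← Finset.card_sdiff_add_card_inter x y]
    push_cast
    ring
  have c2 : ((y \ x).card : ℂ) = (y.card : ℂ) - x.card + t := by
    have h := Finset.card_sdiff_add_card_inter y x
    rw [Finset.inter_comm] at h
    have h' : ((y \ x).card : ℂ) + ((x ∩ y).card : ℂ) = y.card := by exact_mod_cast h
    linear_combination h' - c1
  have c3 : (((x ∪ y)ᶜ).card : ℂ) = (Fintype.card Ω : ℂ) - y.card - t := by
    have h := Finset.card_add_card_compl (x ∪ y)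
    have h2 := Finset.card_union_add_card_inter x y
    have h' : ((x ∪ y).card : ℂ) + ((x ∪ y)ᶜ.card : ℂ) = Fintype.card Ω := by exact_mod_cast h
    have h2' : ((x ∪ y).card : ℂ) + ((x ∩ y).card : ℂ) = x.card + y.card := by exact_mod_cast h2
    linear_combination h' - h2' + c1
  have s : ∀ z : Finset Ω, ∑ i : Ω, (if i ∈ z then (1 : ℂ) else 0) = z.card := by
    intro z
    simp
  have e : ∀ i : Ω, (if i ∉ x ∪ y then (1 : ℂ) else 0) = if i ∈ (x ∪ y)ᶜ then 1 else 0 := by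
    intro i
    simp only [Finset.mem_compl]
  simp only [term_all, e]
  simp only [Finset.sum_add_distrib, ← Finset.sum_mul, ← Finset.mul_sum, s, c1, c2, c3, ← ht]
  ring

/-- `Λ_s^{r1,r2}` is an eigenvector of the transposition Laplacian with eigenvalue
`-s(n-s+1)`: `L^{(r2)} ∘ Λ_s^{r1,r2} = -s(n-s+1) Λ_s^{r1,r2}`. -/
theorem stmt_12 {Ω : Type*} [Fintype Ω] [DecidableEq Ω] (n r1 r2 s : ℕ)
    (hn : Fintype.card Ω = n) (h1 : r1 ≤ n) (h2 : r2 ≤ n)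
    (hs : s ≤ min (min r1 (n - r1)) (min r2 (n - r2)))
    (ψ : {x : Finset Ω // x.card = r1} → ℂ) :
    Lap (Lam Ω n r1 r2 s ψ) =
      (-((s : ℂ) * ((n : ℂ) - s + 1))) • Lam Ω n r1 r2 s ψ := by
  funext x
  apply mul_left_cancel₀ (two_ne_zero : (2 : ℂ) ≠ 0)
  rw [two_Lap]
  simp only [Lam, permAct, Pi.smul_apply, smul_eq_mul, ← Finset.sum_sub_distrib, ← sub_mul]
  rw [Finset.sum_congr rfl (fun i _ => Finset.sum_comm), Finset.sum_comm, Finset.mul_sum,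
    Finset.mul_sum]
  apply Finset.sum_congr rfl
  intro y _
  simp only [← Finset.sum_mul]
  rw [sum_term (hahn n r1 r2 s) x.1 y.1 _ rfl, x.2, y.2, hn,
    hahn_diff n r1 r2 s h1 (by omega) (by omega)]
  ring
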